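/- arXiv:1609.02340 — 2 statements merged into one kernel-verified Lean document; each statement's English description precedes it below -/
import Mathlib

section
/- Let f : [0,1) → ℝ be continuous with f(0) = 0, and suppose f is absolutely integrable on (0,1), i.e. ∫₀¹ |f(t)| dt < ∞. Then lim_{β→0⁺} (1/Γ(β)) ∫₀¹ t^{β−1} f(t) dt = 0. -/
open MeasureTheory

/-!
Since `1 / Γ(β) = β / Γ(β + 1)` and `Γ(β + 1) → 1`, it suffices that `β ∫₀¹ t^(β-1) f(t) dt → 0`.
Given `ε > 0`, continuity at `0` yields `δ > 0` with `|f| ≤ ε` on `(0, δ)`. There the integrand is at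
most `ε t^(β-1)`, whose integral over `(0, 1)` is `ε / β`; on `[δ, 1)` it is at most `δ⁻¹ |f(t)|`.
So `β |∫₀¹ t^(β-1) f(t) dt| ≤ ε + β δ⁻¹ ∫₀¹ |f|`, which is below `2 ε` for small `β`.
-/

lemma integrableOn_rpow_Ioo {β : ℝ} (hβ : 0 < β) :
    IntegrableOn (fun t : ℝ => t ^ (β - 1)) (Set.Ioo 0 1) := by
  have h := intervalIntegral.intervalIntegrable_rpow' (a := 0) (b := 1) (r := β - 1) (by linarith)
  rw [intervalIntegrable_iff_integrableOn_Ioo_of_le zero_le_one] at h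
  exact h

lemma integral_rpow_Ioo {β : ℝ} (hβ : 0 < β) :
    ∫ t in Set.Ioo (0:ℝ) 1, t ^ (β - 1) = 1 / β := by
  rw [← integral_Ioc_eq_integral_Ioo, ← intervalIntegral.integral_of_le zero_le_one,
    integral_rpow (Or.inl (by linarith))]
  simp [hβ.ne']

/-- The splitting estimate: smallness of `f` near `0` controls the singular part of the integral,
and the rest is controlled by the `L¹` norm of `f`. -/
lemma mul_abs_integral_rpow_le {f : ℝ → ℝ} (hf_int : IntegrableOn f (Set.Ioo 0 1))
    {ε δ β : ℝ} (hε : 0 < ε) (hδ : 0 < δ) (hβ : 0 < β)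
    (hf : ∀ t ∈ Set.Ioo (0:ℝ) 1, t < δ → |f t| ≤ ε) :
    β * |∫ t in Set.Ioo (0:ℝ) 1, t ^ (β - 1) * f t|
      ≤ ε + β * (δ⁻¹ * ∫ t in Set.Ioo (0:ℝ) 1, |f t|) := by
  have h1 : IntegrableOn (fun t : ℝ => ε * t ^ (β - 1)) (Set.Ioo 0 1) :=
    (integrableOn_rpow_Ioo hβ).const_mul ε
  have h2 : IntegrableOn (fun t : ℝ => δ⁻¹ * |f t|) (Set.Ioo 0 1) := hf_int.abs.const_mul _
  have key : ‖∫ t in Set.Ioo (0:ℝ) 1, t ^ (β - 1) * f t‖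
      ≤ ∫ t in Set.Ioo (0:ℝ) 1, (ε * t ^ (β - 1) + δ⁻¹ * |f t|) := by
    refine norm_integral_le_of_norm_le (h1.add h2) ?_
    filter_upwards [ae_restrict_mem measurableSet_Ioo] with t ht
    have hp : 0 < t ^ (β - 1) := Real.rpow_pos_of_pos ht.1 _
    rw [Real.norm_eq_abs, abs_mul, abs_of_pos hp]
    rcases lt_or_ge t δ with h | h
    · have := mul_le_mul_of_nonneg_left (hf t ht h) hp.le
      have : 0 ≤ δ⁻¹ * |f t| := by positivity
      linarith
    · have h3 : t ^ (β - 1) ≤ δ⁻¹ := by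
        calc t ^ (β - 1) ≤ t ^ (-1 : ℝ) :=
              Real.rpow_le_rpow_of_exponent_ge ht.1 ht.2.le (by linarith)
          _ = t⁻¹ := Real.rpow_neg_one t
          _ ≤ δ⁻¹ := inv_anti₀ hδ h
      have := mul_le_mul_of_nonneg_right h3 (abs_nonneg (f t))
      have : 0 ≤ ε * t ^ (β - 1) := by positivity
      linarith
  rw [integral_add h1 h2, integral_const_mul, integral_const_mul, integral_rpow_Ioo hβ,
    Real.norm_eq_abs] at key
  calc _ ≤ β * (ε * (1 / β) + δ⁻¹ * ∫ t in Set.Ioo (0:ℝ) 1, |f t|) :=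
        mul_le_mul_of_nonneg_left key hβ.le
    _ = _ := by field_simp

/-- If `f : [0,1) → ℝ` is continuous with `f 0 = 0` and absolutely
integrable on `(0,1)`, then `(1/Γ(β)) ∫₀¹ t^(β-1) f(t) dt → 0` as `β → 0⁺`. -/
theorem gamma_weighted_integral_tendsto_zero
    (f : ℝ → ℝ)
    (hf_cont : ContinuousOn f (Set.Ico 0 1))
    (hf0 : f 0 = 0)
    (hf_int : IntegrableOn f (Set.Ioo 0 1)) :
    Filter.Tendsto
      (fun β : ℝ => (1 / Real.Gamma β) * ∫ t in Set.Ioo (0:ℝ) 1, t ^ (β - 1) * f t)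
      (nhdsWithin 0 (Set.Ioi 0)) (nhds 0) := by
  have hmain : Filter.Tendsto
      (fun β : ℝ => β * ∫ t in Set.Ioo (0:ℝ) 1, t ^ (β - 1) * f t)
      (nhdsWithin 0 (Set.Ioi 0)) (nhds 0) := by
    rw [Metric.tendsto_nhds]
    intro ε hε
    obtain ⟨δ, hδ, hf⟩ := Metric.continuousOn_iff.1 hf_cont 0 (by simp) (ε / 2) (by linarith)
    have hsmall : ∀ t ∈ Set.Ioo (0:ℝ) 1, t < δ → |f t| ≤ ε / 2 := by
      intro t ht htδ
      have := hf t ⟨ht.1.le, ht.2⟩ (by simpa [abs_of_pos ht.1] using htδ)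
      rw [hf0, Real.dist_eq, sub_zero] at this
      exact this.le
    have hlim : Filter.Tendsto
        (fun β : ℝ => ε / 2 + β * (δ⁻¹ * ∫ t in Set.Ioo (0:ℝ) 1, |f t|))
        (nhdsWithin 0 (Set.Ioi 0)) (nhds (ε / 2)) := by
      refine Filter.Tendsto.mono_left ?_ nhdsWithin_le_nhds
      exact Continuous.tendsto' (by fun_prop) _ _ (by simp)
    filter_upwards [hlim.eventually_lt_const (half_lt_self hε),
      self_mem_nhdsWithin] with β hlt hβ
    rw [Real.dist_eq, sub_zero, abs_mul, abs_of_pos (Set.mem_Ioi.1 hβ)]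
    exact (mul_abs_integral_rpow_le hf_int (half_pos hε) hδ hβ hsmall).trans_lt hlt
  have hΓ : Filter.Tendsto (fun β : ℝ => (Real.Gamma (β + 1))⁻¹)
      (nhdsWithin 0 (Set.Ioi 0)) (nhds 1) := by
    have hc : ContinuousAt Real.Gamma (0 + 1) := by
      refine (Real.differentiableAt_Gamma fun m => ?_).continuousAt
      have : (0:ℝ) ≤ m := m.cast_nonneg
      linarith
    have h : Filter.Tendsto (fun β : ℝ => Real.Gamma (β + 1)) (nhds 0) (nhds 1) := by
      have := hc.tendsto.comp (Continuous.tendsto (f := fun β : ℝ => β + 1) (by fun_prop) 0)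
      simpa [Function.comp_def] using this
    simpa using (h.mono_left nhdsWithin_le_nhds).inv₀ one_ne_zero
  have hprod := hΓ.mul hmain
  rw [mul_zero] at hprod
  refine hprod.congr' ?_
  filter_upwards [self_mem_nhdsWithin] with β hβ
  have hβ0 : β ≠ 0 := ne_of_gt hβ
  rw [Real.Gamma_add_one hβ0, mul_inv, ← mul_assoc]
  congr 1
  field_simp
end

section
/- Let n ≥ 1 be an integer, and let a′ = (a′_1,…,a′_{p−1}), a = (a_1,…,a_{p−1}), b′ = (b′_1,…,b′_p), b = (b_1,…,b_p) be real vectors with 0 < a′_i ≤ a_i for each i and b′_j ≥ b_j > 0 for each j. If the function r ↦ p−1Fp(a;b;−r²) on [0,∞) is n-RPD, then the function r ↦ p−1Fp(a′;b′;−r²) is n-RPD. -/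
/-!
Replacing an upper parameter `a` by `a' ≤ a`, or a lower parameter `b` by `b' ≥ b`, multiplies the
`k`-th Taylor coefficient by `(α)_k / (β)_k` with `0 < α ≤ β` (`α = a'`, `β = a`, respectively
`α = b`, `β = b'`). This ratio is the `k`-th moment of a probability measure `μ` on `[0, 1]`: the
beta distribution with shape parameters `α`, `β - α`, or the Dirac mass at `1` when `α = β`
(`exists_measure_moments`). Summing the series under the integral sign, the new function is
the mixture `g r = ∫ f (√x * r) ∂μ(x)` of dilations of the old one. Each dilation `f (√x * ·)` is
`n`-RPD, as the points `t i` may be scaled by `√x`, and nonnegativity of the Hermitian sums passes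
to the mixture (`isRPD_of_moments`). The parameters are then changed one after the other
(`isRPD_mul_prod`); the series involved converge everywhere by the ratio test
(`summable_coeff`).
-/

/-- Rising factorial (Pochhammer symbol) `(x)_k = x(x+1)⋯(x+k-1)` for real `x`. -/
noncomputable def risingFactorial (x : ℝ) (k : ℕ) : ℝ := ∏ i ∈ Finset.range k, (x + (i : ℝ))

/-- The generalized hypergeometric function `pFq(a;b;z)` with real parameters and real
argument, defined by its power series (which converges for every `z` when `p ≤ q`). -/
noncomputable def pFq {p q : ℕ} (a : Fin p → ℝ) (b : Fin q → ℝ) (z : ℝ) : ℝ :=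
  ∑' k : ℕ,
    (∏ i, risingFactorial (a i) k) /
      ((∏ j, risingFactorial (b j) k) * (k.factorial : ℝ)) * z ^ k


/-- A continuous function `f : [0,∞) → ℝ` (modelled as `f : ℝ → ℝ` continuous on
`[0,∞)`) is `n`-RPD (radial positive definite in dimension `n`, class `Φ_n`) if for all
`m`, all points `t_1,…,t_m ∈ ℝ^n` and all complex `ξ_1,…,ξ_m`, the Hermitian sum
`∑_{i,j} f(‖t_i - t_j‖) ξ_i conj(ξ_j)` is a nonnegative real number. -/
def IsRPD (n : ℕ) (f : ℝ → ℝ) : Prop :=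
  ContinuousOn f (Set.Ici 0) ∧
  ∀ (m : ℕ) (t : Fin m → EuclideanSpace ℝ (Fin n)) (ξ : Fin m → ℂ),
    ∃ c : ℝ, 0 ≤ c ∧
      (∑ i, ∑ j, (f ‖t i - t j‖ : ℂ) * ξ i * (starRingEnd ℂ) (ξ j)) = (c : ℂ)

open MeasureTheory ProbabilityTheory Filter Topology

/-! ### Rising factorials and moments of beta distributions -/

lemma risingFactorial_succ (x : ℝ) (k : ℕ) :
    risingFactorial x (k + 1) = risingFactorial x k * (x + k) := by
  simp [risingFactorial, Finset.prod_range_succ]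

lemma risingFactorial_pos {x : ℝ} (hx : 0 < x) (k : ℕ) : 0 < risingFactorial x k :=
  Finset.prod_pos fun _ _ => by positivity

lemma Gamma_add_nat_eq_risingFactorial {x : ℝ} (hx : 0 < x) (k : ℕ) :
    Real.Gamma (x + k) = risingFactorial x k * Real.Gamma x := by
  induction k with
  | zero => simp [risingFactorial]
  | succ k ih =>
    have h : x + ((k + 1 : ℕ) : ℝ) = (x + k) + 1 := by push_cast; ring
    rw [h, Real.Gamma_add_one (by positivity), ih, risingFactorial_succ]
    ring

lemma integral_betaPDFReal {α δ : ℝ} (hα : 0 < α) (hδ : 0 < δ) :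
    ∫ x, betaPDFReal α δ x = 1 := by
  rw [integral_eq_lintegral_of_nonneg_ae]
  · change (∫⁻ x, betaPDF α δ x).toReal = 1
    rw [lintegral_betaPDF_eq_one hα hδ]
    simp
  · refine Eventually.of_forall fun x => ?_
    by_cases hx : 0 < x ∧ x < 1
    · exact (betaPDFReal_pos hx.1 hx.2 hα hδ).le
    · simp [betaPDFReal, hx]
  · exact (stronglyMeasurable_betaPDFReal α δ).aestronglyMeasurable

/-- Multiplying a beta density by `x ^ k` shifts its first shape parameter by `k`, up to a constant
that is a ratio of rising factorials. -/
lemma betaPDFReal_mul_pow {α δ : ℝ} (hα : 0 < α) (hδ : 0 < δ) (k : ℕ) (x : ℝ) :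
    betaPDFReal α δ x * x ^ k =
      risingFactorial α k / risingFactorial (α + δ) k * betaPDFReal (α + k) δ x := by
  by_cases hx : 0 < x ∧ x < 1
  · have h1 : x ^ (α + k - 1) = x ^ (α - 1) * x ^ k := by
      rw [← Real.rpow_natCast x k, ← Real.rpow_add hx.1]
      congr 1
      ring
    have h2 : α + k + δ = (α + δ) + k := by ring
    have g1 := Real.Gamma_pos_of_pos hα
    have g2 := Real.Gamma_pos_of_pos hδ
    have g3 := Real.Gamma_pos_of_pos (add_pos hα hδ)
    have r1 := risingFactorial_pos hα k
    have r2 := risingFactorial_pos (add_pos hα hδ) k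
    simp only [betaPDFReal, hx, and_self, if_true, beta]
    rw [h1, h2, Gamma_add_nat_eq_risingFactorial hα,
      Gamma_add_nat_eq_risingFactorial (add_pos hα hδ)]
    field_simp
  · simp [betaPDFReal, hx]

/-- The ratios `(α)_k / (β)_k` with `0 < α ≤ β` are the moments of a probability measure on
`[0, 1]`. -/
lemma exists_measure_moments {α β : ℝ} (hα : 0 < α) (hαβ : α ≤ β) :
    ∃ μ : Measure ℝ, IsProbabilityMeasure μ ∧ (∀ᵐ x ∂μ, 0 ≤ x ∧ x ≤ 1) ∧
      ∀ k : ℕ, ∫ x, x ^ k ∂μ = risingFactorial α k / risingFactorial β k := by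
  rcases hαβ.eq_or_lt with rfl | hlt
  · refine ⟨Measure.dirac 1, inferInstance, ?_, fun k => ?_⟩
    · rw [ae_dirac_iff (measurableSet_Icc (a := (0 : ℝ)) (b := 1))]
      norm_num
    · rw [integral_dirac, div_self (risingFactorial_pos hα k).ne', one_pow]
  · have hδ : 0 < β - α := sub_pos.2 hlt
    have hm : Measurable (betaPDF α (β - α)) := (measurable_betaPDFReal _ _).ennreal_ofReal
    refine ⟨betaMeasure α (β - α), isProbabilityMeasureBeta hα hδ, ?_, fun k => ?_⟩
    · rw [betaMeasure, ae_withDensity_iff hm]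
      refine Eventually.of_forall fun x hx => ⟨?_, ?_⟩
      · by_contra h
        exact hx (betaPDF_eq_zero_of_nonpos (not_le.1 h).le)
      · by_contra h
        exact hx (betaPDF_eq_zero_of_one_le (not_le.1 h).le)
    · rw [betaMeasure, integral_withDensity_eq_integral_toReal_smul hm
        (Eventually.of_forall fun x => ENNReal.ofReal_lt_top)]
      have h : ∀ x : ℝ, (betaPDF α (β - α) x).toReal • x ^ k =
          risingFactorial α k / risingFactorial β k * betaPDFReal (α + k) (β - α) x := by
        intro x
        have h0 : 0 ≤ betaPDFReal α (β - α) x := by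
          by_cases hx : 0 < x ∧ x < 1
          · exact (betaPDFReal_pos hx.1 hx.2 hα hδ).le
          · simp [betaPDFReal, hx]
        rw [betaPDF, ENNReal.toReal_ofReal h0, smul_eq_mul, betaPDFReal_mul_pow hα hδ,
          add_sub_cancel]
      simp_rw [h]
      rw [integral_const_mul, integral_betaPDFReal (by positivity) hδ, mul_one]

/-! ### Mixtures of dilations -/

/-- The radial function `r ↦ ∑ c_k (-r²)^k` with Taylor coefficients `c`. -/
noncomputable def radialSeries (c : ℕ → ℝ) (r : ℝ) : ℝ := ∑' k, c k * (-(r ^ 2)) ^ k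

/-- The power series with coefficients `c` converges absolutely on the whole line. -/
def IsEntire (c : ℕ → ℝ) : Prop := ∀ R : ℝ, Summable fun k => |c k| * |R| ^ k

lemma IsEntire.continuous {c : ℕ → ℝ} (hc : IsEntire c) : Continuous (radialSeries c) := by
  rw [continuous_iff_continuousAt]
  intro r
  have h : ContinuousOn (radialSeries c) (Metric.ball 0 (|r| + 1)) := by
    refine continuousOn_tsum (u := fun k => |c k| * |(|r| + 1) ^ 2| ^ k) (fun k => by fun_prop)
      (hc _) fun k x hx => ?_
    have hx' : |x| ≤ |r| + 1 := by simpa using (Metric.mem_ball.1 hx).le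
    rw [Real.norm_eq_abs, abs_mul, abs_pow, abs_neg, abs_pow, abs_pow,
      abs_of_nonneg (by positivity : 0 ≤ |r| + 1)]
    gcongr
  exact h.continuousAt (Metric.isOpen_ball.mem_nhds (by simp))

lemma IsEntire.mul {c w : ℕ → ℝ} (hc : IsEntire c) (hw : ∀ k, |w k| ≤ 1) :
    IsEntire fun k => c k * w k := fun R => by
  refine (hc R).of_nonneg_of_le (fun k => by positivity) fun k => ?_
  rw [abs_mul]
  have := mul_le_mul_of_nonneg_left (hw k) (abs_nonneg (c k))
  rw [mul_one] at this
  gcongr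

section Mixture

variable {μ : Measure ℝ} [IsProbabilityMeasure μ]

lemma integrable_pow_of_ae_mem (hμ : ∀ᵐ x ∂μ, 0 ≤ x ∧ x ≤ 1) (k : ℕ) :
    Integrable (fun x : ℝ => x ^ k) μ := by
  refine Integrable.of_bound (C := 1) (by fun_prop) ?_
  filter_upwards [hμ] with x hx
  rw [Real.norm_eq_abs, abs_of_nonneg (pow_nonneg hx.1 k)]
  exact pow_le_one₀ hx.1 hx.2

lemma moment_mem (hμ : ∀ᵐ x ∂μ, 0 ≤ x ∧ x ≤ 1) (k : ℕ) :
    0 ≤ ∫ x, x ^ k ∂μ ∧ ∫ x, x ^ k ∂μ ≤ 1 := by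
  constructor
  · refine integral_nonneg_of_ae ?_
    filter_upwards [hμ] with x hx using pow_nonneg hx.1 k
  · calc ∫ x, x ^ k ∂μ ≤ ∫ _, (1 : ℝ) ∂μ := by
          refine integral_mono_ae (integrable_pow_of_ae_mem hμ k) (integrable_const _) ?_
          filter_upwards [hμ] with x hx using pow_le_one₀ hx.1 hx.2
      _ = 1 := by simp

/-- Multiplying the Taylor coefficients by the moments of `μ` amounts to averaging the dilations
`radialSeries c (√x * ·)` over `x ∼ μ`. -/
lemma integral_radialSeries {c : ℕ → ℝ} (hc : IsEntire c)
    (hμ : ∀ᵐ x ∂μ, 0 ≤ x ∧ x ≤ 1) (r : ℝ) :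
    ∫ x, radialSeries c (√x * r) ∂μ = radialSeries (fun k => c k * ∫ x, x ^ k ∂μ) r := by
  have hint := integrable_pow_of_ae_mem hμ
  have key := hasSum_integral_of_summable_integral_norm (μ := μ)
    (F := fun k (x : ℝ) => c k * (-(r ^ 2)) ^ k * x ^ k) (fun k => (hint k).const_mul _) (by
      refine (hc (r ^ 2)).of_nonneg_of_le (fun k => integral_nonneg fun x => norm_nonneg _)
        fun k => ?_
      have h1 : ∫ x, ‖c k * (-(r ^ 2)) ^ k * x ^ k‖ ∂μ
          = |c k| * |r ^ 2| ^ k * ∫ x, x ^ k ∂μ := by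
        rw [← integral_const_mul]
        refine integral_congr_ae ?_
        filter_upwards [hμ] with x hx
        rw [Real.norm_eq_abs, abs_mul, abs_mul, abs_of_nonneg (pow_nonneg hx.1 k), abs_pow,
          abs_neg]
      rw [h1]
      exact mul_le_of_le_one_right (by positivity) (moment_mem hμ k).2)
  have h2 : ∫ x, radialSeries c (√x * r) ∂μ =
      ∫ x, ∑' k, c k * (-(r ^ 2)) ^ k * x ^ k ∂μ := by
    refine integral_congr_ae ?_
    filter_upwards [hμ] with x hx
    refine tsum_congr fun k => ?_
    rw [mul_pow, Real.sq_sqrt hx.1, ← mul_neg, mul_pow]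
    ring
  rw [h2, ← key.tsum_eq]
  refine tsum_congr fun k => ?_
  rw [integral_const_mul]
  ring

lemma integrable_radialSeries {c : ℕ → ℝ} (hc : IsEntire c)
    (hμ : ∀ᵐ x ∂μ, 0 ≤ x ∧ x ≤ 1) (r : ℝ) :
    Integrable (fun x => radialSeries c (√x * r)) μ := by
  have hcont : Continuous fun x : ℝ => radialSeries c (√x * r) :=
    hc.continuous.comp (by fun_prop)
  obtain ⟨C, hC⟩ := (isCompact_Icc (a := (0 : ℝ)) (b := 1)).exists_bound_of_continuousOn
    hcont.continuousOn
  refine Integrable.of_bound (C := C) hcont.aestronglyMeasurable ?_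
  filter_upwards [hμ] with x hx using hC x hx

lemma isRPD_of_moments {n : ℕ} {c : ℕ → ℝ} (hc : IsEntire c)
    (hμ : ∀ᵐ x ∂μ, 0 ≤ x ∧ x ≤ 1) (h : IsRPD n (radialSeries c)) :
    IsRPD n (radialSeries fun k => c k * ∫ x, x ^ k ∂μ) := by
  have hc' : IsEntire fun k => c k * ∫ x, x ^ k ∂μ := hc.mul fun k => by
    rw [abs_of_nonneg (moment_mem hμ k).1]
    exact (moment_mem hμ k).2
  refine ⟨hc'.continuous.continuousOn, fun m t ξ => ?_⟩
  -- The Hermitian sum of the dilation by `√x` is that of the original function at `√x • t`.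
  choose q hq0 hq using fun x : ℝ => h.2 m (fun i => √x • t i) ξ
  have hq' : ∀ x, (∑ i, ∑ j, (radialSeries c (√x * ‖t i - t j‖) : ℂ) * ξ i *
      (starRingEnd ℂ) (ξ j)) = (q x : ℂ) := by
    intro x
    rw [← hq x]
    simp only [← smul_sub, norm_smul, Real.norm_eq_abs, abs_of_nonneg (Real.sqrt_nonneg x)]
  refine ⟨∫ x, q x ∂μ, integral_nonneg hq0, ?_⟩
  have hi : ∀ i j, Integrable (fun x => (radialSeries c (√x * ‖t i - t j‖) : ℂ) * ξ i *
      (starRingEnd ℂ) (ξ j)) μ := fun i j =>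
    (((integrable_radialSeries hc hμ _).ofReal).mul_const _).mul_const _
  rw [← integral_complex_ofReal]
  simp_rw [← hq']
  rw [integral_finsetSum _ fun i _ => integrable_finsetSum _ fun j _ => hi i j]
  refine Finset.sum_congr rfl fun i _ => ?_
  rw [integral_finsetSum _ fun j _ => hi i j]
  refine Finset.sum_congr rfl fun j _ => ?_
  rw [integral_mul_const, integral_mul_const, integral_complex_ofReal,
    integral_radialSeries hc hμ]

end Mixture

/-! ### Changing the parameters one at a time -/

lemma isRPD_mul_prod {n : ℕ} {ι : Type*} (s : Finset ι) {α β : ι → ℝ} (hα : ∀ i, 0 < α i)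
    (hαβ : ∀ i, α i ≤ β i) {c : ℕ → ℝ} (hc : IsEntire c) (h : IsRPD n (radialSeries c)) :
    IsEntire (fun k => c k * ∏ i ∈ s, risingFactorial (α i) k / risingFactorial (β i) k) ∧
    IsRPD n (radialSeries fun k =>
      c k * ∏ i ∈ s, risingFactorial (α i) k / risingFactorial (β i) k) := by
  classical
  induction s using Finset.induction_on with
  | empty => simpa using ⟨hc, h⟩
  | insert a s ha ih =>
    obtain ⟨μ, hp, hμ, hm⟩ := exists_measure_moments (hα a) (hαβ a)
    have e : (fun k => c k * ∏ i ∈ insert a s,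
        risingFactorial (α i) k / risingFactorial (β i) k) = fun k =>
        (c k * ∏ i ∈ s, risingFactorial (α i) k / risingFactorial (β i) k) *
          ∫ x, x ^ k ∂μ := by
      funext k
      rw [Finset.prod_insert ha, hm]
      ring
    rw [e]
    refine ⟨ih.1.mul fun k => ?_, isRPD_of_moments ih.1 hμ ih.2⟩
    rw [abs_of_nonneg (moment_mem hμ k).1]
    exact (moment_mem hμ k).2

/-- The Taylor coefficients of `pFq a b`. -/
noncomputable def coeff {p q : ℕ} (a : Fin p → ℝ) (b : Fin q → ℝ) (k : ℕ) : ℝ :=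
  (∏ i, risingFactorial (a i) k) / ((∏ j, risingFactorial (b j) k) * (k.factorial : ℝ))

/-- Consecutive terms have ratio
`(∏ i, (a i + k) / (b i.succ + k)) * (|R| / ((b 0 + k) * (k + 1)))`, which tends to `0`. -/
lemma summable_coeff {p : ℕ} {a : Fin p → ℝ} {b : Fin (p + 1) → ℝ} (ha : ∀ i, 0 < a i)
    (hb : ∀ j, 0 < b j) : IsEntire (coeff a b) := by
  intro R
  have hpos : ∀ k, 0 < coeff a b k := fun k =>
    div_pos (Finset.prod_pos fun i _ => risingFactorial_pos (ha i) k)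
      (mul_pos (Finset.prod_pos fun i _ => risingFactorial_pos (hb i) k) (by positivity))
  rcases eq_or_ne R 0 with rfl | hR
  · refine summable_of_ne_finset_zero (s := {0}) fun k hk => ?_
    have : k ≠ 0 := by simpa using hk
    simp [this]
  have hR' : 0 < |R| := abs_pos.2 hR
  refine summable_of_ratio_test_tendsto_lt_one (l := 0) one_pos
    (Eventually.of_forall fun k => (mul_pos (abs_pos.2 (hpos k).ne') (pow_pos hR' k)).ne') ?_
  have e : ∀ k : ℕ, ‖|coeff a b (k + 1)| * |R| ^ (k + 1)‖ / ‖|coeff a b k| * |R| ^ k‖ =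
      (∏ i, (a i + k) / (b i.succ + k)) * (|R| / ((b 0 + k) * (k + 1))) := by
    intro k
    have p1 : (∏ i, risingFactorial (a i) k) ≠ 0 :=
      (Finset.prod_pos fun i _ => risingFactorial_pos (ha i) k).ne'
    have p2 : (∏ j, risingFactorial (b j) k) ≠ 0 :=
      (Finset.prod_pos fun i _ => risingFactorial_pos (hb i) k).ne'
    have p3 : (∏ i : Fin p, (b i.succ + k)) ≠ 0 :=
      (Finset.prod_pos fun i _ => add_pos_of_pos_of_nonneg (hb i.succ) k.cast_nonneg).ne'
    have p4 : b 0 + k ≠ 0 := (add_pos_of_pos_of_nonneg (hb 0) k.cast_nonneg).ne'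
    rw [Real.norm_of_nonneg (by positivity), Real.norm_of_nonneg (by positivity),
      abs_of_pos (hpos _), abs_of_pos (hpos _), coeff, coeff]
    simp_rw [risingFactorial_succ, Finset.prod_mul_distrib, Finset.prod_div_distrib]
    rw [Fin.prod_univ_succ (fun j => b j + (k : ℝ)), Nat.factorial_succ, pow_succ]
    push_cast
    field_simp
  simp_rw [e]
  have t0 : ∀ x : ℝ, Tendsto (fun k : ℕ => x + (k : ℝ)) atTop atTop := fun x =>
    tendsto_atTop_add_const_left _ _ tendsto_natCast_atTop_atTop
  have t1 : Tendsto (fun k : ℕ => ∏ i, (a i + (k : ℝ)) / (b i.succ + k)) atTop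
      (𝓝 (∏ _i : Fin p, (1 : ℝ))) := by
    refine tendsto_finsetProd _ fun i _ => ?_
    have h1 : Tendsto (fun k : ℕ => 1 + (a i - b i.succ) / (b i.succ + k)) atTop (𝓝 (1 + 0)) :=
      tendsto_const_nhds.add (tendsto_const_nhds.div_atTop (t0 _))
    rw [add_zero] at h1
    refine h1.congr fun k => ?_
    have : b i.succ + k ≠ 0 := (add_pos_of_pos_of_nonneg (hb i.succ) k.cast_nonneg).ne'
    field_simp
    ring
  have t2 : Tendsto (fun k : ℕ => |R| / ((b 0 + k) * ((k : ℝ) + 1))) atTop (𝓝 0) :=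
    tendsto_const_nhds.div_atTop ((t0 _).atTop_mul_atTop₀
      (tendsto_atTop_add_const_right _ _ tendsto_natCast_atTop_atTop))
  simpa using t1.mul t2

/-- Monotonicity of radial positive definiteness of Bessel-type
hypergeometric functions: decreasing the upper parameters and increasing the lower
parameters preserves membership in `Φ_n`. -/
theorem rpd_monotone_in_parameters
    (n p : ℕ) (hn : 1 ≤ n)
    (a' a : Fin p → ℝ) (b' b : Fin (p + 1) → ℝ)
    (ha' : ∀ i, 0 < a' i) (ha : ∀ i, a' i ≤ a i)
    (hb : ∀ j, 0 < b j) (hb' : ∀ j, b j ≤ b' j)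
    (h : IsRPD n (fun r => pFq a b (-(r ^ 2)))) :
    IsRPD n (fun r => pFq a' b' (-(r ^ 2))) := by
  have ha0 : ∀ i, 0 < a i := fun i => (ha' i).trans_le (ha i)
  have hc : IsEntire (coeff a b) := summable_coeff ha0 hb
  have h1 := isRPD_mul_prod Finset.univ ha' ha hc h
  have h2 := (isRPD_mul_prod Finset.univ hb hb' h1.1 h1.2).2
  have e : (fun k => coeff a b k * (∏ i, risingFactorial (a' i) k / risingFactorial (a i) k) *
      ∏ j, risingFactorial (b j) k / risingFactorial (b' j) k) = coeff a' b' := by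
    funext k
    have p1 : (∏ i, risingFactorial (a i) k) ≠ 0 :=
      (Finset.prod_pos fun i _ => risingFactorial_pos (ha0 i) k).ne'
    have p2 : (∏ j, risingFactorial (b j) k) ≠ 0 :=
      (Finset.prod_pos fun i _ => risingFactorial_pos (hb i) k).ne'
    have p3 : (∏ j, risingFactorial (b' j) k) ≠ 0 :=
      (Finset.prod_pos fun i _ => risingFactorial_pos ((hb i).trans_le (hb' i)) k).ne'
    simp only [coeff, Finset.prod_div_distrib]
    field_simp
  rw [e] at h2
  exact h2
end
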